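/- Let Xᵢ, X_{−i}, M, Z, T be discrete random variables with finite range on a common probability space, where Xᵢ takes values in a finite set 𝒳ᵢ, X_{−i} in a finite set 𝒳_{−i}, and T in a finite set 𝒯. Assume: (a) Xᵢ and X_{−i} are conditionally independent given (M, Z); (b) for all x ∈ 𝒳ᵢ, x' ∈ 𝒳_{−i}, m, z with Pr[Xᵢ=x, X_{−i}=x', M=m, Z=z] > 0 and all τ ∈ 𝒯, Pr[T=τ | Xᵢ=x, X_{−i}=x', M=m, Z=z] = Pr[T=τ | Xᵢ=x, X_{−i}=x']; and (c) there exist nonnegative functions qᵢ : 𝒳ᵢ×𝒯 → ℝ and q_{−i} : 𝒳_{−i}×𝒯 → ℝ such that Pr[T=τ | Xᵢ=x, X_{−i}=x'] = qᵢ(x,τ)·q_{−i}(x',τ) whenever Pr[Xᵢ=x, X_{−i}=x'] > 0. Then there exists a function c such that for all x, m, z with Pr[Xᵢ=x, M=m, Z=z] > 0 and all τ ∈ 𝒯: Pr[T=τ | Xᵢ=x, M=m, Z=z] = qᵢ(x,τ)·c(m,z,τ). -/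

import Mathlib

open Finset

noncomputable section

open Classical in
/-- Probability of an event under a probability mass function on a finite sample space. -/
def pr {Ω : Type*} [Fintype Ω] (p : Ω → ℝ) (E : Ω → Prop) : ℝ :=
  ∑ ω ∈ Finset.univ.filter E, p ω

/-- Conditional probability `Pr[E | F] = Pr[E ∧ F] / Pr[F]`. -/
def condPr {Ω : Type*} [Fintype Ω] (p : Ω → ℝ) (E F : Ω → Prop) : ℝ :=
  pr p (fun ω => E ω ∧ F ω) / pr p F

/-!
Conditioning on `Xᵢ = x, M = m, Z = z` and averaging over the value `x'` of `X₋ᵢ`, the transcript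
has conditional probability `∑ x', Pr[X₋ᵢ = x' | Xᵢ = x, M = m, Z = z] · qᵢ(x, τ) · q₋ᵢ(x', τ)`.
Conditional independence removes `Xᵢ = x` from the weights, so after `qᵢ(x, τ)` is pulled out
what remains is the conditional expectation of `q₋ᵢ(X₋ᵢ, τ)` given `(M, Z) = (m, z)`, in which `x`
no longer occurs.
-/

section FiniteProbability

variable {Ω β : Type*} [Fintype Ω] {p : Ω → ℝ} {E F G : Ω → Prop}

theorem pr_nonneg (hp : ∀ ω, 0 ≤ p ω) (E : Ω → Prop) : 0 ≤ pr p E :=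
  sum_nonneg fun ω _ => hp ω

theorem pr_mono (hp : ∀ ω, 0 ≤ p ω) (h : ∀ ω, E ω → F ω) : pr p E ≤ pr p F := by
  classical
  exact sum_le_sum_of_subset_of_nonneg (monotone_filter_right _ fun ω _ => h ω) fun ω _ _ => hp ω

theorem pr_eq_sum_pr_fiber (p : Ω → ℝ) (E : Ω → Prop) {Y : Ω → β} {s : Finset β}
    (hs : ∀ ω, Y ω ∈ s) : pr p E = ∑ y ∈ s, pr p (fun ω => E ω ∧ Y ω = y) := by
  classical
  rw [pr, ← sum_fiberwise_of_maps_to fun ω _ => hs ω]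
  exact sum_congr rfl fun y _ => sum_congr (by ext; simp) fun _ _ => rfl

/- If `pr p F = 0`, both sides vanish, whatever the junk value of `condPr p E F`. -/
theorem pr_and_eq_mul_condPr (hp : ∀ ω, 0 ≤ p ω) (E F : Ω → Prop) :
    pr p (fun ω => E ω ∧ F ω) = pr p F * condPr p E F := by
  refine (mul_div_cancel_of_imp' fun hF => ?_).symm
  exact le_antisymm (hF ▸ pr_mono hp fun _ h => h.2) (pr_nonneg hp _)

theorem condPr_eq_sum_condPr_mul_condPr (hp : ∀ ω, 0 ≤ p ω) (E F : Ω → Prop) {Y : Ω → β}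
    {s : Finset β} (hs : ∀ ω, Y ω ∈ s) :
    condPr p E F =
      ∑ y ∈ s, condPr p (fun ω => Y ω = y) F * condPr p E (fun ω => Y ω = y ∧ F ω) := by
  calc condPr p E F
      = ∑ y ∈ s, pr p (fun ω => E ω ∧ Y ω = y ∧ F ω) / pr p F := by
        rw [condPr, pr_eq_sum_pr_fiber p _ hs, sum_div]
        simp only [and_assoc, and_comm (a := F _)]
    _ = ∑ y ∈ s, condPr p (fun ω => Y ω = y) F * condPr p E (fun ω => Y ω = y ∧ F ω) :=
        sum_congr rfl fun y _ => by
          rw [pr_and_eq_mul_condPr hp, mul_div_right_comm, ← condPr]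

/-- Conditional independence of the events `E` and `F` given the event `G`, that is
`Pr[E ∧ F | G] = Pr[E | G] · Pr[F | G]`, with the denominators cleared so that it holds
automatically when `G` has probability zero. -/
def CondIndepEvents (p : Ω → ℝ) (E F G : Ω → Prop) : Prop :=
  pr p (fun ω => E ω ∧ F ω ∧ G ω) * pr p G =
    pr p (fun ω => E ω ∧ G ω) * pr p (fun ω => F ω ∧ G ω)

theorem CondIndepEvents.condPr_and_eq (h : CondIndepEvents p E F G) (hp : ∀ ω, 0 ≤ p ω)
    (hEG : 0 < pr p (fun ω => E ω ∧ G ω)) :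
    condPr p F (fun ω => E ω ∧ G ω) = condPr p F G := by
  have hG : 0 < pr p G := hEG.trans_le (pr_mono hp fun _ h => h.2)
  rw [condPr, condPr, div_eq_div_iff hEG.ne' hG.ne', mul_comm (pr p fun ω => F ω ∧ G ω)]
  simpa only [and_left_comm (a := F _), CondIndepEvents] using h

theorem condPr_eq_mul_sum_of_condIndepEvents (hp : ∀ ω, 0 ≤ p ω) {Y : Ω → β} {s : Finset β}
    (hs : ∀ ω, Y ω ∈ s) {a : ℝ} {b : β → ℝ} (hFG : 0 < pr p (fun ω => F ω ∧ G ω))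
    (hindep : ∀ y, CondIndepEvents p F (fun ω => Y ω = y) G)
    (hfactor : ∀ y, 0 < pr p (fun ω => F ω ∧ Y ω = y ∧ G ω) →
      condPr p E (fun ω => F ω ∧ Y ω = y ∧ G ω) = a * b y) :
    condPr p E (fun ω => F ω ∧ G ω) = a * ∑ y ∈ s, condPr p (fun ω => Y ω = y) G * b y := by
  rw [condPr_eq_sum_condPr_mul_condPr hp E _ hs, mul_sum]
  refine sum_congr rfl fun y _ => ?_
  have hweight := (hindep y).condPr_and_eq hp hFG
  simp only [and_left_comm (a := Y _ = y)]
  obtain hzero | hpos := (pr_nonneg hp fun ω => F ω ∧ Y ω = y ∧ G ω).eq_or_lt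
  · have hweight_zero : condPr p (fun ω => Y ω = y) (fun ω => F ω ∧ G ω) = 0 := by
      simp only [condPr, and_left_comm (a := Y _ = y), ← hzero, zero_div]
    rw [← hweight, hweight_zero, zero_mul, zero_mul, mul_zero]
  · rw [hweight, hfactor y hpos, mul_left_comm]

end FiniteProbability

theorem special_rectangularity_general {Ω Xt Xt' γ δ Tt : Type*} [Fintype Ω]
    (p : Ω → ℝ) (hp : ∀ ω, 0 ≤ p ω)
    (Xi : Ω → Xt) (Xmi : Ω → Xt') (M : Ω → γ) (Z : Ω → δ) (T : Ω → Tt)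
    (hindep : ∀ (x : Xt) (x' : Xt') (m : γ) (z : δ),
      CondIndepEvents p (fun ω => Xi ω = x) (fun ω => Xmi ω = x') (fun ω => M ω = m ∧ Z ω = z))
    (qi : Xt → Tt → ℝ) (qmi : Xt' → γ → δ → Tt → ℝ)
    (hfactor : ∀ (x : Xt) (x' : Xt') (m : γ) (z : δ),
      0 < pr p (fun ω => Xi ω = x ∧ Xmi ω = x' ∧ M ω = m ∧ Z ω = z) →
      ∀ τ : Tt,
        condPr p (fun ω => T ω = τ)
            (fun ω => Xi ω = x ∧ Xmi ω = x' ∧ M ω = m ∧ Z ω = z) =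
          qi x τ * qmi x' m z τ) :
    ∃ c : γ → δ → Tt → ℝ,
      ∀ (x : Xt) (m : γ) (z : δ),
        0 < pr p (fun ω => Xi ω = x ∧ M ω = m ∧ Z ω = z) →
        ∀ τ : Tt,
          condPr p (fun ω => T ω = τ) (fun ω => Xi ω = x ∧ M ω = m ∧ Z ω = z) =
            qi x τ * c m z τ :=
  ⟨fun m z τ => ∑ x' ∈ (Set.finite_range Xmi).toFinset,
      condPr p (fun ω => Xmi ω = x') (fun ω => M ω = m ∧ Z ω = z) * qmi x' m z τ,
    fun x m z hpos τ => condPr_eq_mul_sum_of_condIndepEvents hp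
      (fun ω => (Set.finite_range Xmi).mem_toFinset.2 (Set.mem_range_self ω)) hpos
      (fun x' => hindep x x' m z) fun x' h => hfactor x x' m z h τ⟩

/-- Specialized rectangularity lemma.  Suppose (a) `Xᵢ` and `X₋ᵢ` are conditionally
independent given `(M, Z)`; (b) conditioned on the full input `(Xᵢ, X₋ᵢ)`, the
transcript `T` is independent of `(M, Z)`; and (c) the conditional distribution of
`T` given the full input factorizes as `qᵢ(x,τ)·q₋ᵢ(x',τ)`.  Then there is a
function `c` such that `Pr[T=τ | Xᵢ=x, M=m, Z=z] = qᵢ(x,τ)·c(m,z,τ)` whenever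
`Pr[Xᵢ=x, M=m, Z=z] > 0`. -/
theorem special_rectangularity {Ω Xt Xt' γ δ Tt : Type*} [Fintype Ω]
    [Fintype Xt] [Fintype Xt'] [Fintype Tt]
    (p : Ω → ℝ) (hp : ∀ ω, 0 ≤ p ω) (hsum : ∑ ω, p ω = 1)
    (Xi : Ω → Xt) (Xmi : Ω → Xt') (M : Ω → γ) (Z : Ω → δ) (T : Ω → Tt)
    (hindep : ∀ (x : Xt) (x' : Xt') (m : γ) (z : δ),
      pr p (fun ω => Xi ω = x ∧ Xmi ω = x' ∧ M ω = m ∧ Z ω = z) *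
          pr p (fun ω => M ω = m ∧ Z ω = z) =
        pr p (fun ω => Xi ω = x ∧ M ω = m ∧ Z ω = z) *
          pr p (fun ω => Xmi ω = x' ∧ M ω = m ∧ Z ω = z))
    (hmarkov : ∀ (x : Xt) (x' : Xt') (m : γ) (z : δ),
      0 < pr p (fun ω => Xi ω = x ∧ Xmi ω = x' ∧ M ω = m ∧ Z ω = z) →
      ∀ τ : Tt,
        condPr p (fun ω => T ω = τ)
            (fun ω => Xi ω = x ∧ Xmi ω = x' ∧ M ω = m ∧ Z ω = z) =
          condPr p (fun ω => T ω = τ) (fun ω => Xi ω = x ∧ Xmi ω = x'))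
    (qi : Xt → Tt → ℝ) (qmi : Xt' → Tt → ℝ)
    (hqi : ∀ x τ, 0 ≤ qi x τ) (hqmi : ∀ x' τ, 0 ≤ qmi x' τ)
    (hrect : ∀ (x : Xt) (x' : Xt'),
      0 < pr p (fun ω => Xi ω = x ∧ Xmi ω = x') →
      ∀ τ : Tt,
        condPr p (fun ω => T ω = τ) (fun ω => Xi ω = x ∧ Xmi ω = x') =
          qi x τ * qmi x' τ) :
    ∃ c : γ → δ → Tt → ℝ,
      ∀ (x : Xt) (m : γ) (z : δ),
        0 < pr p (fun ω => Xi ω = x ∧ M ω = m ∧ Z ω = z) →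
        ∀ τ : Tt,
          condPr p (fun ω => T ω = τ) (fun ω => Xi ω = x ∧ M ω = m ∧ Z ω = z) =
            qi x τ * c m z τ :=
  special_rectangularity_general p hp Xi Xmi M Z T hindep qi (fun x' _ _ => qmi x')
    fun x x' m z h τ => (hmarkov x x' m z h τ).trans <|
      hrect x x' (h.trans_le (pr_mono hp fun _ h => ⟨h.1, h.2.1⟩)) τ
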